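/- Let N ≥ 1, let w : ℝ^N → ℝ be twice continuously differentiable, and let ψ : ℝ^N → ℝ be twice continuously differentiable with compact support. Then ∫_{ℝ^N} (−Δw)(x) ∂₁(ψ w)(x) dx = ∫_{ℝ^N} ( (1/2) |∇w(x)|² ∂₁ψ(x) + w(x) ⟨∇w(x), ∇(∂₁ψ)(x)⟩ + ⟨∇w(x), ∇ψ(x)⟩ ∂₁w(x) ) dx, where Δ is the Laplacian and ∂₁ denotes the partial derivative in the first coordinate direction. -/

import Mathlib

open MeasureTheory Filter Set Real
open scoped RealInnerProductSpace

noncomputable section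

/-- The partial derivative in the first coordinate direction on `ℝ^N` (`N ≥ 1`). -/
def pd1 (N : ℕ) (hN : 1 ≤ N) (g : EuclideanSpace ℝ (Fin N) → ℝ)
    (x : EuclideanSpace ℝ (Fin N)) : ℝ :=
  fderiv ℝ g x (EuclideanSpace.single (⟨0, hN⟩ : Fin N) (1 : ℝ))

/-- The Laplacian `Δg = ∑ᵢ ∂ᵢ∂ᵢ g` on `ℝ^N`. -/
def lap (N : ℕ) (g : EuclideanSpace ℝ (Fin N) → ℝ) (x : EuclideanSpace ℝ (Fin N)) : ℝ :=
  ∑ i : Fin N, fderiv ℝ (fun y => fderiv ℝ g y (EuclideanSpace.single i (1 : ℝ))) x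
    (EuclideanSpace.single i (1 : ℝ))

/-!
Green's identity, applied to the compactly supported `C¹` function `∂ᵥ(ψw)`, turns
`∫ (-Δw) ∂ᵥ(ψw)` into `∫ ⟪∇w, ∇∂ᵥ(ψw)⟫`. When the inner gradient is expanded, the two terms
`ψ ⟪∇w, ∇∂ᵥw⟫ + |∇w|² ∂ᵥψ` appear; since the Hessian is symmetric, `⟪∇w, ∇∂ᵥw⟫ = ½ ∂ᵥ|∇w|²`, so
that they add up to `½ |∇w|² ∂ᵥψ + ½ ∂ᵥ(ψ|∇w|²)`, and the exact derivative integrates to zero.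
-/

section SecondDerivatives

variable {𝕜 E F : Type*} [NontriviallyNormedField 𝕜] [NormedAddCommGroup E] [NormedSpace 𝕜 E]
  [NormedAddCommGroup F] [NormedSpace 𝕜 F] {f : E → F}

theorem contDiff_fderiv_apply_const {m n : WithTop ℕ∞} (hf : ContDiff 𝕜 n f) (hmn : m + 1 ≤ n)
    (v : E) : ContDiff 𝕜 m fun x => fderiv 𝕜 f x v :=
  (hf.fderiv_right hmn).clm_apply contDiff_const

theorem differentiable_fderiv (hf : ContDiff 𝕜 2 f) : Differentiable 𝕜 (fderiv 𝕜 f) :=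
  (hf.fderiv_right (m := 1) le_rfl).differentiable one_ne_zero

theorem fderiv_fderiv_apply_const {x : E} (hf : DifferentiableAt 𝕜 (fderiv 𝕜 f) x) (u v : E) :
    fderiv 𝕜 (fun y => fderiv 𝕜 f y u) x v = fderiv 𝕜 (fderiv 𝕜 f) x v u := by
  simp [fderiv_clm_apply hf (differentiableAt_const u)]

end SecondDerivatives

section Gradient

open scoped Gradient

variable {E : Type*} [NormedAddCommGroup E] [InnerProductSpace ℝ E] [CompleteSpace E]
  {f g : E → ℝ}

theorem inner_gradient_gradient_eq_sum {ι : Type*} [Fintype ι]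
    (b : OrthonormalBasis ι ℝ E) (x : E) :
    ⟪∇ f x, ∇ g x⟫ = ∑ i, fderiv ℝ f x (b i) * fderiv ℝ g x (b i) := by
  rw [← b.sum_inner_mul_inner]
  simp only [inner_gradient_left, inner_gradient_right, conj_trivial]

theorem contDiff_gradient {m n : WithTop ℕ∞} (hf : ContDiff ℝ n f) (hmn : m + 1 ≤ n) :
    ContDiff ℝ m (∇ f) :=
  (InnerProductSpace.toDual ℝ E).symm.toContinuousLinearEquiv.contDiff.comp (hf.fderiv_right hmn)

theorem differentiableAt_gradient {x : E} (hf : DifferentiableAt ℝ (fderiv ℝ f) x) :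
    DifferentiableAt ℝ (∇ f) x :=
  (InnerProductSpace.toDual ℝ E).symm.toContinuousLinearEquiv.differentiableAt.comp x hf

theorem inner_fderiv_gradient_apply {x : E} (hf : DifferentiableAt ℝ (fderiv ℝ f) x) (u v : E) :
    ⟪fderiv ℝ (∇ f) x v, u⟫ = fderiv ℝ (fderiv ℝ f) x v u := by
  have hcoord : (fun y => fderiv ℝ f y u) = fun y => ⟪∇ f y, u⟫ := by
    simp only [inner_gradient_left]
  rw [← fderiv_fderiv_apply_const hf, hcoord,
    fderiv_inner_apply ℝ (differentiableAt_gradient hf) (differentiableAt_const u)]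
  simp

theorem inner_gradient_gradient_fderiv_apply (hf : ContDiff ℝ 2 f) (v x : E) :
    ⟪∇ f x, ∇ (fun y => fderiv ℝ f y v) x⟫ = 1 / 2 * fderiv ℝ (fun y => ‖∇ f y‖ ^ 2) x v := by
  have hf' : DifferentiableAt ℝ (fderiv ℝ f) x := differentiable_fderiv hf x
  have hsymm : IsSymmSndFDerivAt ℝ f x := hf.contDiffAt.isSymmSndFDerivAt (by simp)
  calc ⟪∇ f x, ∇ (fun y => fderiv ℝ f y v) x⟫
      = fderiv ℝ (fderiv ℝ f) x (∇ f x) v := by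
        rw [real_inner_comm, inner_gradient_left, fderiv_fderiv_apply_const hf']
    _ = ⟪∇ f x, fderiv ℝ (∇ f) x v⟫ := by
        rw [hsymm.eq, real_inner_comm, inner_fderiv_gradient_apply hf']
    _ = 1 / 2 * fderiv ℝ (fun y => ‖∇ f y‖ ^ 2) x v := by
        simp [(differentiableAt_gradient hf').hasFDerivAt.norm_sq.fderiv]

theorem inner_gradient_gradient_fderiv_mul_apply (hf : ContDiff ℝ 2 f) (hg : ContDiff ℝ 2 g)
    (v x : E) :
    ⟪∇ f x, ∇ (fun y => fderiv ℝ (fun z => g z * f z) y v) x⟫ =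
      1 / 2 * ‖∇ f x‖ ^ 2 * fderiv ℝ g x v + f x * ⟪∇ f x, ∇ (fun y => fderiv ℝ g y v) x⟫ +
        ⟪∇ f x, ∇ g x⟫ * fderiv ℝ f x v +
        1 / 2 * fderiv ℝ (fun y => g y * ‖∇ f y‖ ^ 2) x v := by
  have df : Differentiable ℝ f := hf.differentiable two_ne_zero
  have dg : Differentiable ℝ g := hg.differentiable two_ne_zero
  have df' : Differentiable ℝ fun y => fderiv ℝ f y v :=
    (differentiable_fderiv hf).clm_apply (differentiable_const v)
  have dg' : Differentiable ℝ fun y => fderiv ℝ g y v :=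
    (differentiable_fderiv hg).clm_apply (differentiable_const v)
  have dnorm : DifferentiableAt ℝ (fun y => ‖∇ f y‖ ^ 2) x :=
    (differentiableAt_gradient (differentiable_fderiv hf x)).norm_sq ℝ
  have hprod : (fun y => fderiv ℝ (fun z => g z * f z) y v) =
      fun y => g y * fderiv ℝ f y v + f y * fderiv ℝ g y v := by
    ext y
    simp [fderiv_fun_mul (dg y) (df y)]
  have hhalf := inner_gradient_gradient_fderiv_apply hf v x
  rw [hprod, fderiv_fun_mul (dg x) dnorm]
  simp only [real_inner_comm _ (∇ f x), inner_gradient_left] at hhalf ⊢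
  rw [fderiv_fun_add ((dg x).fun_mul (df' x)) ((df x).fun_mul (dg' x)),
    fderiv_fun_mul (dg x) (df' x), fderiv_fun_mul (df x) (dg' x)]
  simp only [add_apply, smul_apply, smul_eq_mul, hhalf, ← real_inner_self_eq_norm_sq,
    inner_gradient_left]
  ring

end Gradient

section Laplacian

open scoped Laplacian

theorem laplacian_eq_sum_fderiv_fderiv_apply {ι E F : Type*} [Fintype ι] [NormedAddCommGroup E]
    [InnerProductSpace ℝ E] [FiniteDimensional ℝ E] [NormedAddCommGroup F] [NormedSpace ℝ F]
    {f : E → F} {x : E} (b : OrthonormalBasis ι ℝ E) (hf : DifferentiableAt ℝ (fderiv ℝ f) x) :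
    Δ f x = ∑ i, fderiv ℝ (fun y => fderiv ℝ f y (b i)) x (b i) := by
  simp [InnerProductSpace.laplacian_eq_iteratedFDeriv_orthonormalBasis f b,
    iteratedFDeriv_two_apply, fderiv_fderiv_apply_const hf]

theorem lap_eq_laplacian {N : ℕ} {g : EuclideanSpace ℝ (Fin N) → ℝ}
    (hg : Differentiable ℝ (fderiv ℝ g)) : lap N g = Δ g := by
  ext x
  simp [lap, laplacian_eq_sum_fderiv_fderiv_apply (EuclideanSpace.basisFun (Fin N) ℝ) (hg x)]

end Laplacian

section CompactSupport

variable {E F : Type*} [NormedAddCommGroup E] [NormedSpace ℝ E] [MeasurableSpace E] [BorelSpace E]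
  [NormedAddCommGroup F] [NormedSpace ℝ F] {μ : Measure E}

theorem integrable_fderiv_apply_of_hasCompactSupport [IsFiniteMeasureOnCompacts μ] {f : E → F}
    (hf : ContDiff ℝ 1 f) (hfc : HasCompactSupport f) (v : E) :
    Integrable (fun x => fderiv ℝ f x v) μ :=
  ((hf.continuous_fderiv one_ne_zero).clm_apply
    continuous_const).integrable_of_hasCompactSupport (hfc.fderiv_apply ℝ v)

variable [FiniteDimensional ℝ E] [μ.IsAddHaarMeasure]

theorem integral_smul_fderiv_eq_neg_of_hasCompactSupport {f : E → ℝ} {g : E → F}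
    (hf : ContDiff ℝ 1 f) (hg : ContDiff ℝ 1 g) (hgc : HasCompactSupport g) (v : E) :
    ∫ x, f x • fderiv ℝ g x v ∂μ = -∫ x, fderiv ℝ f x v • g x ∂μ := by
  have hf' : Continuous fun x => fderiv ℝ f x v :=
    (hf.continuous_fderiv one_ne_zero).clm_apply continuous_const
  have hg' : Continuous fun x => fderiv ℝ g x v :=
    (hg.continuous_fderiv one_ne_zero).clm_apply continuous_const
  exact integral_smul_fderiv_eq_neg_fderiv_smul_of_integrable
    ((hf'.smul hg.continuous).integrable_of_hasCompactSupport hgc.smul_left)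
    ((hf.continuous.smul hg').integrable_of_hasCompactSupport (hgc.fderiv_apply ℝ v).smul_left)
    ((hf.continuous.smul hg.continuous).integrable_of_hasCompactSupport hgc.smul_left)
    (fun x _ => hf.differentiable one_ne_zero x) (fun x _ => hg.differentiable one_ne_zero x)

theorem integral_fderiv_apply_eq_zero_of_hasCompactSupport {f : E → F} (hf : ContDiff ℝ 1 f)
    (hfc : HasCompactSupport f) (v : E) : ∫ x, fderiv ℝ f x v ∂μ = 0 := by
  simpa using integral_smul_fderiv_eq_neg_of_hasCompactSupport (μ := μ) (f := fun _ => 1)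
    contDiff_const hf hfc v

end CompactSupport

section Green

open scoped Gradient Laplacian

variable {E : Type*} [NormedAddCommGroup E] [InnerProductSpace ℝ E] [MeasurableSpace E]
  [BorelSpace E]

theorem integrable_inner_gradient_of_hasCompactSupport [CompleteSpace E] {μ : Measure E}
    [IsFiniteMeasureOnCompacts μ] {f g : E → ℝ} (hf : ContDiff ℝ 1 f) (hg : ContDiff ℝ 1 g)
    (hgc : HasCompactSupport g) : Integrable (fun x => ⟪∇ f x, ∇ g x⟫) μ := by
  have hf' : Continuous (∇ f) := (contDiff_gradient (m := 0) hf (by simp)).continuous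
  have hg' : Continuous (∇ g) := (contDiff_gradient (m := 0) hg (by simp)).continuous
  refine (hf'.inner hg').integrable_of_hasCompactSupport ((hgc.fderiv ℝ).mono fun x hx h => hx ?_)
  simp [gradient, h]

variable [FiniteDimensional ℝ E]

theorem integral_neg_laplacian_mul_eq_integral_inner_gradient {μ : Measure E} [μ.IsAddHaarMeasure]
    {f g : E → ℝ} (hf : ContDiff ℝ 2 f) (hg : ContDiff ℝ 1 g) (hgc : HasCompactSupport g) :
    ∫ x, -Δ f x * g x ∂μ = ∫ x, ⟪∇ f x, ∇ g x⟫ ∂μ := by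
  let b := stdOrthonormalBasis ℝ E
  have hfi (i) : ContDiff ℝ 1 fun x => fderiv ℝ f x (b i) :=
    contDiff_fderiv_apply_const hf le_rfl (b i)
  have hfii (i) : Continuous fun x => fderiv ℝ (fun y => fderiv ℝ f y (b i)) x (b i) :=
    ((hfi i).continuous_fderiv one_ne_zero).clm_apply continuous_const
  have hgi (i) : Continuous fun x => fderiv ℝ g x (b i) :=
    (hg.continuous_fderiv one_ne_zero).clm_apply continuous_const
  have hlap (i) : Integrable (fun x => -(fderiv ℝ (fun y => fderiv ℝ f y (b i)) x (b i) * g x)) μ :=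
    (((hfii i).mul hg.continuous).integrable_of_hasCompactSupport hgc.mul_left).neg
  have hgrad (i) : Integrable (fun x => fderiv ℝ f x (b i) * fderiv ℝ g x (b i)) μ :=
    ((hfi i).continuous.mul (hgi i)).integrable_of_hasCompactSupport
      (hgc.fderiv_apply ℝ (b i)).mul_left
  calc ∫ x, -Δ f x * g x ∂μ
      = ∑ i, ∫ x, -(fderiv ℝ (fun y => fderiv ℝ f y (b i)) x (b i) * g x) ∂μ := by
        rw [← integral_finsetSum _ fun i _ => hlap i]
        simp only [laplacian_eq_sum_fderiv_fderiv_apply b (differentiable_fderiv hf _), neg_mul,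
          Finset.sum_mul, Finset.sum_neg_distrib]
    _ = ∑ i, ∫ x, fderiv ℝ f x (b i) * fderiv ℝ g x (b i) ∂μ := by
        refine Finset.sum_congr rfl fun i _ => ?_
        rw [integral_neg]
        exact (integral_smul_fderiv_eq_neg_of_hasCompactSupport (hfi i) hg hgc (b i)).symm
    _ = ∫ x, ⟪∇ f x, ∇ g x⟫ ∂μ := by
        rw [← integral_finsetSum _ fun i _ => hgrad i]
        simp only [inner_gradient_gradient_eq_sum b]

theorem ibp_laplacian_term_general (μ : Measure E) [μ.IsAddHaarMeasure] {w ψ : E → ℝ}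
    (hw : ContDiff ℝ 2 w) (hψ : ContDiff ℝ 2 ψ) (hψ_supp : HasCompactSupport ψ) (v : E) :
    ∫ x, -Δ w x * fderiv ℝ (fun y => ψ y * w y) x v ∂μ =
      ∫ x, (1 / 2 * ‖∇ w x‖ ^ 2 * fderiv ℝ ψ x v +
        w x * ⟪∇ w x, ∇ (fun y => fderiv ℝ ψ y v) x⟫ + ⟪∇ w x, ∇ ψ x⟫ * fderiv ℝ w x v) ∂μ := by
  let φ : E → ℝ := fun x => fderiv ℝ (fun y => ψ y * w y) x v
  let h : E → ℝ := fun x => ψ x * ‖∇ w x‖ ^ 2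
  have hφ : ContDiff ℝ 1 φ := contDiff_fderiv_apply_const (hψ.mul hw) le_rfl v
  have hφ_supp : HasCompactSupport φ := hψ_supp.mul_right.fderiv_apply ℝ v
  have hh : ContDiff ℝ 1 h :=
    (hψ.of_le one_le_two).mul ((contDiff_gradient hw le_rfl).norm_sq ℝ)
  have hh_supp : HasCompactSupport h := hψ_supp.mul_right
  have hinner : Integrable (fun x => ⟪∇ w x, ∇ φ x⟫) μ :=
    integrable_inner_gradient_of_hasCompactSupport (hw.of_le one_le_two) hφ hφ_supp
  have hexact : Integrable (fun x => 1 / 2 * fderiv ℝ h x v) μ :=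
    (integrable_fderiv_apply_of_hasCompactSupport hh hh_supp v).const_mul (1 / 2)
  calc ∫ x, -Δ w x * φ x ∂μ
      = ∫ x, ⟪∇ w x, ∇ φ x⟫ ∂μ :=
        integral_neg_laplacian_mul_eq_integral_inner_gradient hw hφ hφ_supp
    _ = ∫ x, (⟪∇ w x, ∇ φ x⟫ - 1 / 2 * fderiv ℝ h x v) ∂μ := by
        rw [integral_sub hinner hexact, integral_const_mul,
          integral_fderiv_apply_eq_zero_of_hasCompactSupport hh hh_supp, mul_zero, sub_zero]
    _ = _ := by
        simp only [φ, h, inner_gradient_gradient_fderiv_mul_apply hw hψ v, add_sub_cancel_right]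

end Green

/-- **Integration-by-parts identity for the Laplacian term (Proposition 3.3).**
For `w` of class `C²` and `ψ` of class `C²` with compact support,
`∫ (−Δw) ∂₁(ψw) = ∫ ((1/2)|∇w|² ∂₁ψ + w ⟨∇w, ∇∂₁ψ⟩ + ⟨∇w, ∇ψ⟩ ∂₁w)`. -/
theorem ibp_laplacian_term (N : ℕ) (hN : 1 ≤ N)
    (w : EuclideanSpace ℝ (Fin N) → ℝ) (hw : ContDiff ℝ 2 w)
    (ψ : EuclideanSpace ℝ (Fin N) → ℝ) (hψ : ContDiff ℝ 2 ψ)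
    (hψ_supp : HasCompactSupport ψ) :
    ∫ x, (-(lap N w x)) * pd1 N hN (fun y => ψ y * w y) x
      = ∫ x, (1 / 2 * ‖gradient w x‖ ^ 2 * pd1 N hN ψ x
          + w x * ⟪gradient w x, gradient (fun y => pd1 N hN ψ y) x⟫
          + ⟪gradient w x, gradient ψ x⟫ * pd1 N hN w x) := by
  simpa only [lap_eq_laplacian (differentiable_fderiv hw), pd1] using
    ibp_laplacian_term_general volume hw hψ hψ_supp (EuclideanSpace.single ⟨0, hN⟩ 1)
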